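/- arXiv:1307.6540 — 2 statements merged into one kernel-verified Lean document; each statement's English description precedes it below -/
import Mathlib

section
/- Let c : ℝ^d × ℝ^d → [0,∞] be Borel measurable, symmetric, and lower semi-continuous, and let μ be a Borel probability measure on ℝ^d. Then there exists γ^opt ∈ P_sym^∞(ℝ^d) with γ^opt ↦ μ such that C_∞[γ^opt] = F_∞^OT[μ], and there exists an infinitely representable symmetric probability measure μ₂^opt on ℝ^d × ℝ^d with both marginals μ such that ∫ c dμ₂^opt = F_∞^OT[μ]. -/
open MeasureTheory ENNReal Filter Topology ProbabilityTheory

noncomputable section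

/-- `ℝ^d` with the Euclidean norm. -/
abbrev Ed (d : ℕ) := EuclideanSpace ℝ (Fin d)

/-- A Borel probability measure on the countable product `(ℝ^d)^ℕ` is *exchangeable*
(symmetric) if it is invariant under every finite permutation of the coordinates. -/
def IsExchangeable {d : ℕ} (γ : Measure (ℕ → Ed d)) : Prop :=
  ∀ σ : Equiv.Perm ℕ, {n : ℕ | σ n ≠ n}.Finite →
    γ.map (fun x n => x (σ n)) = γ

/-- `γ ↦ μ` : the pushforward of `γ` under every coordinate projection is `μ`. -/
def HasMarginal {d : ℕ} (γ : Measure (ℕ → Ed d)) (μ : Measure (Ed d)) : Prop :=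
  ∀ n : ℕ, γ.map (fun x => x n) = μ

/-- The infinite-body cost `C_∞[γ] = ∫ c(x₁,x₂) dγ`. -/
def Cinf {d : ℕ} (c : Ed d → Ed d → ℝ≥0∞) (γ : Measure (ℕ → Ed d)) : ℝ≥0∞ :=
  ∫⁻ x, c (x 0) (x 1) ∂γ

/-- The optimal cost of the infinite-body optimal transport problem,
`F_∞^OT[μ] = inf { C_∞[γ] : γ ∈ P_sym^∞(ℝ^d), γ ↦ μ }`. -/
def FinfOT {d : ℕ} (c : Ed d → Ed d → ℝ≥0∞) (μ : Measure (Ed d)) : ℝ≥0∞ :=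
  ⨅ (γ : Measure (ℕ → Ed d)) (_ : IsProbabilityMeasure γ) (_ : IsExchangeable γ)
    (_ : HasMarginal γ μ), Cinf c γ

/-- `μ₂` is infinitely representable: it is the two-coordinate marginal of an
exchangeable probability measure on `(ℝ^d)^ℕ`. -/
def InfRep {d : ℕ} (μ₂ : Measure (Ed d × Ed d)) : Prop :=
  ∃ γ : Measure (ℕ → Ed d), IsProbabilityMeasure γ ∧ IsExchangeable γ ∧
    ∀ i j : ℕ, i ≠ j → γ.map (fun x => (x i, x j)) = μ₂

/-!
Direct method. The exchangeable laws on `X^ι` with all marginals equal to `μ` are tight, because a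
product of compact sets `K i` with `∑ i, μ (K i)ᶜ` small carries most of the mass of each of them;
they are cut out by equations between continuous pushforwards, hence closed, so they are compact by
Prokhorov's theorem. The product law `μ^ι` shows that there is at least one. By the layer cake
formula, the portmanteau theorem and Fatou's lemma, a lower semicontinuous cost has a lower
semicontinuous integral, which therefore attains its minimum. The law of any two coordinates under
a minimizer is the minimizing pair measure, since exchangeability makes all these laws equal.
-/

lemma volume_Ioi_inter_ofReal_lt (a : ℝ≥0∞) :
    volume (Set.Ioi 0 ∩ {t : ℝ | ENNReal.ofReal t < a}) = a := by
  rcases eq_or_ne a ∞ with rfl | ha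
  · simp
  · have hIoo : Set.Ioi 0 ∩ {t : ℝ | ENNReal.ofReal t < a} = Set.Ioo 0 a.toReal := by
      ext t
      exact and_congr_right fun ht => ENNReal.ofReal_lt_iff_lt_toReal (le_of_lt ht) ha
    simp [hIoo, ha]

lemma lintegral_eq_lintegral_measure_ofReal_lt {Ω : Type*} [MeasurableSpace Ω] (ν : Measure Ω)
    [SFinite ν] {f : Ω → ℝ≥0∞} (hf : Measurable f) :
    ∫⁻ x, f x ∂ν = ∫⁻ t in Set.Ioi (0 : ℝ), ν {x | ENNReal.ofReal t < f x} := by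
  have hsubgraph : MeasurableSet {p : Ω × ℝ | ENNReal.ofReal p.2 < f p.1} :=
    measurableSet_lt (by fun_prop) (by fun_prop)
  have hsection : ∀ x, (volume.restrict (Set.Ioi (0 : ℝ))) {t | ENNReal.ofReal t < f x} = f x := by
    intro x
    rw [Measure.restrict_apply' measurableSet_Ioi, Set.inter_comm, volume_Ioi_inter_ofReal_lt]
  calc ∫⁻ x, f x ∂ν
      = ∫⁻ x, (volume.restrict (Set.Ioi (0 : ℝ))) {t | ENNReal.ofReal t < f x} ∂ν := by
        simp only [hsection]
    _ = (ν.prod (volume.restrict (Set.Ioi 0))) {p | ENNReal.ofReal p.2 < f p.1} :=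
        (Measure.prod_apply hsubgraph).symm
    _ = ∫⁻ t in Set.Ioi (0 : ℝ), ν {x | ENNReal.ofReal t < f x} :=
        Measure.prod_apply_symm hsubgraph

lemma lowerSemicontinuous_lintegral_probabilityMeasure {Ω : Type*} [MeasurableSpace Ω]
    [TopologicalSpace Ω] [BorelSpace Ω] [TopologicalSpace.PseudoMetrizableSpace Ω]
    [TopologicalSpace.SeparableSpace Ω] {f : Ω → ℝ≥0∞} (hf : LowerSemicontinuous f) :
    LowerSemicontinuous fun ν : ProbabilityMeasure Ω => ∫⁻ x, f x ∂(ν : Measure Ω) := by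
  -- With a metric on `Ω`, the Lévy–Prokhorov metric makes `𝓝 ν` countably generated, as Fatou's
  -- lemma requires.
  let _ := TopologicalSpace.pseudoMetrizableSpacePseudoMetric Ω
  have hanti (ν : ProbabilityMeasure Ω) :
      Antitone fun t : ℝ => (ν : Measure Ω) {x | ENNReal.ofReal t < f x} :=
    fun s t hst => measure_mono fun x hx => (ENNReal.ofReal_le_ofReal hst).trans_lt hx
  rw [lowerSemicontinuous_iff_le_liminf]
  intro ν
  simp_rw [lintegral_eq_lintegral_measure_ofReal_lt _ hf.measurable]
  calc ∫⁻ t in Set.Ioi (0 : ℝ), (ν : Measure Ω) {x | ENNReal.ofReal t < f x}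
      ≤ ∫⁻ t in Set.Ioi (0 : ℝ),
          liminf (fun ν' : ProbabilityMeasure Ω => (ν' : Measure Ω) {x | ENNReal.ofReal t < f x})
            (𝓝 ν) :=
        lintegral_mono fun t => ProbabilityMeasure.le_liminf_measure_open_of_tendsto tendsto_id
          (hf.isOpen_preimage _)
    _ ≤ liminf (fun ν' : ProbabilityMeasure Ω =>
          ∫⁻ t in Set.Ioi (0 : ℝ), (ν' : Measure Ω) {x | ENNReal.ofReal t < f x}) (𝓝 ν) :=
        lintegral_liminf_le' fun ν' => (hanti ν').measurable.aemeasurable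

lemma isTightMeasureSet_of_forall_map_eval {ι : Type*} [Countable ι] {X : ι → Type*}
    [∀ i, TopologicalSpace (X i)] [∀ i, MeasurableSpace (X i)] {S : Set (Measure (∀ i, X i))}
    (hS : ∀ i, IsTightMeasureSet (Measure.map (fun x => x i) '' S)) : IsTightMeasureSet S := by
  simp only [isTightMeasureSet_iff_exists_isCompact_measure_compl_le, Set.forall_mem_image] at hS ⊢
  intro ε hε
  obtain ⟨δ, hδ, hsum⟩ := ENNReal.exists_pos_sum_of_countable' hε.ne' ι
  choose K hK hKS using fun i => hS i (δ i) (hδ i)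
  refine ⟨Set.univ.pi K, isCompact_univ_pi hK, fun γ hγ => ?_⟩
  have hcompl : (Set.univ.pi K)ᶜ = ⋃ i, (fun x : ∀ i, X i => x i) ⁻¹' (K i)ᶜ := by
    ext x
    simp
  calc γ (Set.univ.pi K)ᶜ
      ≤ ∑' i, γ ((fun x : ∀ i, X i => x i) ⁻¹' (K i)ᶜ) := hcompl ▸ measure_iUnion_le _
    _ ≤ ∑' i, γ.map (fun x => x i) (K i)ᶜ :=
        ENNReal.tsum_le_tsum fun i => Measure.le_map_apply (measurable_pi_apply i).aemeasurable _
    _ ≤ ∑' i, δ i := ENNReal.tsum_le_tsum fun i => hKS i hγ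
    _ ≤ ε := hsum.le

lemma isClosed_setOfPred_map_eq {Ω Ω' : Type*} [MeasurableSpace Ω] [TopologicalSpace Ω]
    [OpensMeasurableSpace Ω] [MeasurableSpace Ω'] [TopologicalSpace Ω'] [BorelSpace Ω']
    [HasOuterApproxClosed Ω'] {f : Ω → Ω'} (hf : Continuous f)
    {F : ProbabilityMeasure Ω → ProbabilityMeasure Ω'} (hF : Continuous F) :
    IsClosed {γ : ProbabilityMeasure Ω | (γ : Measure Ω).map f = F γ} := by
  have hset : {γ : ProbabilityMeasure Ω | (γ : Measure Ω).map f = F γ} =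
      {γ | γ.map hf.measurable.aemeasurable = F γ} :=
    Set.ext fun γ => (Subtype.ext_iff (a1 := γ.map hf.measurable.aemeasurable)).symm
  exact hset ▸ isClosed_eq (ProbabilityMeasure.continuous_map hf) hF

lemma exists_perm_finite_ne_apply_eq_apply_eq {α : Type*} {a b a' b' : α} (hab : a ≠ b)
    (hab' : a' ≠ b') : ∃ σ : Equiv.Perm α, {x | σ x ≠ x}.Finite ∧ σ a = a' ∧ σ b = b' := by
  classical
  have hswap (x y : α) : {z | Equiv.swap x y z ≠ z}.Finite :=
    (Set.toFinite {x, y}).subset fun z hz => (Equiv.swap_apply_ne_self_iff.1 hz).2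
  have hne : a' ≠ Equiv.swap a a' b := by
    simpa using (Equiv.swap a a').injective.ne hab
  refine ⟨Equiv.swap (Equiv.swap a a' b) b' * Equiv.swap a a',
    ((hswap _ _).union (hswap _ _)).subset (Equiv.Perm.set_support_mul_subset _ _), ?_, ?_⟩
  · rw [Equiv.Perm.mul_apply, Equiv.swap_apply_left, Equiv.swap_apply_of_ne_of_ne hne hab']
  · rw [Equiv.Perm.mul_apply, Equiv.swap_apply_left]

section Exchangeable

variable {ι X : Type*} [MeasurableSpace X]

/-- Exchangeability of the law of a family of `X`-valued variables indexed by `ι`: invariance under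
the permutations of `ι` that move finitely many indices. It extends `IsExchangeable` to arbitrary
state spaces and index sets. -/
def IsExchangeableLaw (γ : Measure (ι → X)) : Prop :=
  ∀ σ : Equiv.Perm ι, {i : ι | σ i ≠ i}.Finite → γ.map (fun x i => x (σ i)) = γ

/-- All one-coordinate marginals of `γ` are equal to `μ`. It extends `HasMarginal` to arbitrary
state spaces and index sets. -/
def HasCommonMarginal (γ : Measure (ι → X)) (μ : Measure X) : Prop :=
  ∀ i : ι, γ.map (fun x => x i) = μ

/-- The value of the exchangeable optimal transport problem: the infimum of `∫ f dγ` over the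
exchangeable probability measures `γ` on `X^ι` with all marginals equal to `μ`. The cost `f` may
depend on all coordinates; `FinfOT c` is the case `f x = c (x 0) (x 1)`. -/
def exchangeableOTCost (f : (ι → X) → ℝ≥0∞) (μ : Measure X) : ℝ≥0∞ :=
  ⨅ (γ : Measure (ι → X)) (_ : IsProbabilityMeasure γ) (_ : IsExchangeableLaw γ)
    (_ : HasCommonMarginal γ μ), ∫⁻ x, f x ∂γ

variable (ι) in
/-- `μ₂` is the law of any two distinct coordinates under an exchangeable probability measure on
`X^ι`. Infinite representability, `InfRep`, is the case `ι = ℕ`. -/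
def IsExchangeablyRepresentable (μ₂ : Measure (X × X)) : Prop :=
  ∃ γ : Measure (ι → X), IsProbabilityMeasure γ ∧ IsExchangeableLaw γ ∧
    ∀ i j : ι, i ≠ j → γ.map (fun x => (x i, x j)) = μ₂

variable (ι) in
/-- The feasible set of the exchangeable optimal transport problem, as a subset of the space of
probability measures with the topology of weak convergence. -/
def exchangeableCouplings (μ : Measure X) : Set (ProbabilityMeasure (ι → X)) :=
  {γ | IsExchangeableLaw (γ : Measure (ι → X)) ∧ HasCommonMarginal (γ : Measure (ι → X)) μ}

lemma IsExchangeableLaw.map_pair_eq_map_pair {γ : Measure (ι → X)} (hγ : IsExchangeableLaw γ)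
    {i j k l : ι} (hij : i ≠ j) (hkl : k ≠ l) :
    γ.map (fun x => (x i, x j)) = γ.map (fun x => (x k, x l)) := by
  obtain ⟨σ, hσ, rfl, rfl⟩ := exists_perm_finite_ne_apply_eq_apply_eq hkl hij
  conv_rhs => rw [← hγ σ hσ, Measure.map_map (by fun_prop) (by fun_prop)]
  rfl

lemma IsExchangeableLaw.map_swap_map_pair {γ : Measure (ι → X)} (hγ : IsExchangeableLaw γ)
    {i j : ι} (hij : i ≠ j) :
    (γ.map fun x => (x i, x j)).map Prod.swap = γ.map fun x => (x i, x j) := by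
  rw [Measure.map_map (by fun_prop) (by fun_prop)]
  exact hγ.map_pair_eq_map_pair hij.symm hij

lemma IsExchangeableLaw.isExchangeablyRepresentable_map_pair {γ : Measure (ι → X)}
    [IsProbabilityMeasure γ] (hγ : IsExchangeableLaw γ) {i j : ι} (hij : i ≠ j) :
    IsExchangeablyRepresentable ι (γ.map fun x => (x i, x j)) :=
  ⟨γ, inferInstance, hγ, fun _ _ hkl => hγ.map_pair_eq_map_pair hkl hij⟩

lemma HasCommonMarginal.map_fst_map_pair {γ : Measure (ι → X)} {μ : Measure X}
    (hγ : HasCommonMarginal γ μ) (i j : ι) :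
    (γ.map fun x => (x i, x j)).map Prod.fst = μ := by
  rw [Measure.map_map (by fun_prop) (by fun_prop)]
  exact hγ i

lemma HasCommonMarginal.map_snd_map_pair {γ : Measure (ι → X)} {μ : Measure X}
    (hγ : HasCommonMarginal γ μ) (i j : ι) :
    (γ.map fun x => (x i, x j)).map Prod.snd = μ := by
  rw [Measure.map_map (by fun_prop) (by fun_prop)]
  exact hγ j

lemma lintegral_eq_exchangeableOTCost_of_isMinOn {f : (ι → X) → ℝ≥0∞} {μ : Measure X}
    {γ : ProbabilityMeasure (ι → X)} (hγ : γ ∈ exchangeableCouplings ι μ)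
    (hmin : IsMinOn (fun γ : ProbabilityMeasure (ι → X) => ∫⁻ x, f x ∂(γ : Measure (ι → X)))
      (exchangeableCouplings ι μ) γ) :
    ∫⁻ x, f x ∂(γ : Measure (ι → X)) = exchangeableOTCost f μ :=
  le_antisymm
    (le_iInf₂ fun γ' hprob => le_iInf₂ fun hexch hmarg =>
      isMinOn_iff.1 hmin ⟨γ', hprob⟩ ⟨hexch, hmarg⟩)
    (iInf₂_le_of_le (γ : Measure (ι → X)) inferInstance (iInf₂_le hγ.1 hγ.2))

variable (ι) in
lemma exchangeableCouplings_nonempty (μ : Measure X) [IsProbabilityMeasure μ] :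
    (exchangeableCouplings ι μ).Nonempty :=
  ⟨⟨Measure.infinitePi fun _ => μ, inferInstance⟩,
    fun σ _ => Measure.map_infinitePi_infinitePi_of_inj (P := fun _ => μ) σ.injective,
    fun i => Measure.infinitePi_map_eval (fun _ => μ) i⟩

section Topology

variable [Countable ι] [TopologicalSpace X] [BorelSpace X]

lemma isClosed_setOfPred_isExchangeableLaw [TopologicalSpace.PseudoMetrizableSpace X]
    [SecondCountableTopology X] :
    IsClosed {γ : ProbabilityMeasure (ι → X) | IsExchangeableLaw (γ : Measure (ι → X))} := by
  simp only [IsExchangeableLaw, Set.ofPred_forall]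
  exact isClosed_iInter fun σ => isClosed_iInter fun _ =>
    isClosed_setOfPred_map_eq (Pi.continuous_precomp σ) continuous_id

lemma isClosed_setOfPred_hasCommonMarginal [HasOuterApproxClosed X] [SecondCountableTopology X]
    (μ : Measure X) [IsProbabilityMeasure μ] :
    IsClosed {γ : ProbabilityMeasure (ι → X) | HasCommonMarginal (γ : Measure (ι → X)) μ} := by
  let μ' : ProbabilityMeasure X := ⟨μ, inferInstance⟩
  simp only [HasCommonMarginal, Set.ofPred_forall]
  exact isClosed_iInter fun i =>
    isClosed_setOfPred_map_eq (f := fun x : ι → X => x i) (F := fun _ => μ')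
      (continuous_apply i) continuous_const

variable [PolishSpace X]

variable (ι) in
lemma isTightMeasureSet_setOfPred_hasCommonMarginal (μ : Measure X) [IsFiniteMeasure μ] :
    IsTightMeasureSet {γ : Measure (ι → X) | HasCommonMarginal γ μ} := by
  refine isTightMeasureSet_of_forall_map_eval fun i => ?_
  refine (isTightMeasureSet_singleton (μ := μ)).subset ?_
  rintro _ ⟨γ, hγ, rfl⟩
  exact hγ i

variable (ι) in
lemma isCompact_exchangeableCouplings (μ : Measure X) [IsProbabilityMeasure μ] :
    IsCompact (exchangeableCouplings ι μ) := by
  have hclosed : IsClosed (exchangeableCouplings ι μ) :=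
    isClosed_setOfPred_isExchangeableLaw.inter (isClosed_setOfPred_hasCommonMarginal μ)
  rw [← hclosed.closure_eq]
  refine isCompact_closure_of_isTightMeasureSet
    ((isTightMeasureSet_setOfPred_hasCommonMarginal ι μ).subset ?_)
  rintro _ ⟨γ, hγ, rfl⟩
  exact hγ.2

lemma exists_mem_exchangeableCouplings_lintegral_eq_exchangeableOTCost {f : (ι → X) → ℝ≥0∞}
    (hf : LowerSemicontinuous f) (μ : Measure X) [IsProbabilityMeasure μ] :
    ∃ γ ∈ exchangeableCouplings ι μ,
      ∫⁻ x, f x ∂(γ : Measure (ι → X)) = exchangeableOTCost f μ := by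
  obtain ⟨γ, hγ, hmin⟩ := LowerSemicontinuousOn.exists_isMinOn (exchangeableCouplings_nonempty ι μ)
    (isCompact_exchangeableCouplings ι μ)
    ((lowerSemicontinuous_lintegral_probabilityMeasure hf).lowerSemicontinuousOn _)
  exact ⟨γ, hγ, lintegral_eq_exchangeableOTCost_of_isMinOn hγ hmin⟩

theorem infinite_body_OT_minimizer_exists_general {i j : ι} (hij : i ≠ j) (c : X → X → ℝ≥0∞)
    (hlsc : LowerSemicontinuous fun p : X × X => c p.1 p.2)
    (μ : Measure X) [IsProbabilityMeasure μ] :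
    (∃ γ : Measure (ι → X), IsProbabilityMeasure γ ∧ IsExchangeableLaw γ ∧
      HasCommonMarginal γ μ ∧
      ∫⁻ x, c (x i) (x j) ∂γ = exchangeableOTCost (fun x : ι → X => c (x i) (x j)) μ) ∧
    (∃ μ₂ : Measure (X × X), IsProbabilityMeasure μ₂ ∧
      μ₂.map Prod.swap = μ₂ ∧ μ₂.map Prod.fst = μ ∧ μ₂.map Prod.snd = μ ∧
      IsExchangeablyRepresentable ι μ₂ ∧
      ∫⁻ p, c p.1 p.2 ∂μ₂ = exchangeableOTCost (fun x : ι → X => c (x i) (x j)) μ) := by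
  have hcost : LowerSemicontinuous fun x : ι → X => c (x i) (x j) :=
    hlsc.comp (g := fun x : ι → X => (x i, x j)) (by fun_prop)
  obtain ⟨γ, ⟨hexch, hmarg⟩, hopt⟩ :=
    exists_mem_exchangeableCouplings_lintegral_eq_exchangeableOTCost hcost μ
  refine ⟨⟨γ, inferInstance, hexch, hmarg, hopt⟩,
    (γ : Measure (ι → X)).map fun x => (x i, x j),
    Measure.isProbabilityMeasure_map (by fun_prop), hexch.map_swap_map_pair hij,
    hmarg.map_fst_map_pair i j, hmarg.map_snd_map_pair i j,
    hexch.isExchangeablyRepresentable_map_pair hij, ?_⟩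
  rw [lintegral_map hlsc.measurable (by fun_prop), hopt]

end Topology

end Exchangeable

/-- Theorem 2.8 (existence of minimizers of the infinite-body OT problem): for a
symmetric, Borel measurable, lower semi-continuous cost there is a minimizer
`γ^opt` of the infinite-body problem, and a minimizing infinitely representable
pair measure `μ₂^opt`. -/
theorem infinite_body_OT_minimizer_exists
    {d : ℕ} (c : Ed d → Ed d → ℝ≥0∞)
    (hmeas : Measurable fun p : Ed d × Ed d => c p.1 p.2)
    (hsymm : ∀ x y, c x y = c y x)
    (hlsc : LowerSemicontinuous fun p : Ed d × Ed d => c p.1 p.2)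
    (μ : Measure (Ed d)) [IsProbabilityMeasure μ] :
    (∃ γ : Measure (ℕ → Ed d), IsProbabilityMeasure γ ∧ IsExchangeable γ ∧
      HasMarginal γ μ ∧ Cinf c γ = FinfOT c μ) ∧
    (∃ μ₂ : Measure (Ed d × Ed d), IsProbabilityMeasure μ₂ ∧
      μ₂.map Prod.swap = μ₂ ∧ μ₂.map Prod.fst = μ ∧ μ₂.map Prod.snd = μ ∧
      InfRep μ₂ ∧ ∫⁻ p, c p.1 p.2 ∂μ₂ = FinfOT c μ) :=
  infinite_body_OT_minimizer_exists_general zero_ne_one c hlsc μ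
end
end

section
/- Let N ≥ 2 be an integer and let ρ ∈ L¹(ℝ³) be nonnegative with ∫_{ℝ³} ρ = N, and assume ∫∫ ρ(x)ρ(y)/|x−y| dx dy < ∞ (e.g. ρ ∈ L¹ ∩ L³). Then lim_{k→∞} V_ee^{SCE,k}[ρ] = (1/2)(1 − 1/N) ∫∫_{ℝ³×ℝ³} ρ(x)ρ(y)/|x−y| dx dy. -/
open MeasureTheory ENNReal Filter Topology ProbabilityTheory

noncomputable section

/-- A measure on `(ℝ^d)^N` is symmetric if it is invariant under all permutations
of the coordinates. -/
def IsSymmetricN {d N : ℕ} (γ : Measure (Fin N → Ed d)) : Prop :=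
  ∀ σ : Equiv.Perm (Fin N), γ.map (fun x i => x (σ i)) = γ

/-- `μ₂` is `N`-representable: it is the two-coordinate marginal of a symmetric
probability measure on `(ℝ^d)^N`. -/
def NRep {d : ℕ} (N : ℕ) (μ₂ : Measure (Ed d × Ed d)) : Prop :=
  ∃ γ : Measure (Fin N → Ed d), IsProbabilityMeasure γ ∧ IsSymmetricN γ ∧
    ∀ i j : Fin N, i ≠ j → γ.map (fun x => (x i, x j)) = μ₂

/-- The Coulomb cost `1/|x-y|` with values in `[0,∞]` (equal to `∞` on the diagonal). -/
def coulomb {d : ℕ} (x y : Ed d) : ℝ≥0∞ := (ENNReal.ofReal (dist x y))⁻¹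

/-- The reduced SCE functional `V_ee^{SCE,k}[ρ]`: `binom(N,2)` times the infimum of
the Coulomb pair energy over symmetric `k`-representable pair measures whose
marginals have Lebesgue density `ρ/N`. -/
def VSCEk (N k : ℕ) (ρ : Ed 3 → ℝ) : ℝ≥0∞ :=
  (N.choose 2 : ℝ≥0∞) *
    ⨅ (μ₂ : Measure (Ed 3 × Ed 3)) (_ : IsProbabilityMeasure μ₂)
      (_ : μ₂.map Prod.swap = μ₂)
      (_ : μ₂.map Prod.fst = volume.withDensity fun y => ENNReal.ofReal (ρ y / N))
      (_ : μ₂.map Prod.snd = volume.withDensity fun y => ENNReal.ofReal (ρ y / N))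
      (_ : NRep k μ₂),
      ∫⁻ p, coulomb p.1 p.2 ∂μ₂

/-!
The product coupling `μ ⊗ μ`, with `μ = ρ/N`, is `k`-representable for every `k`, so only the lower
bound is at stake. The Coulomb cost is a mixture of squares `∫ f_z(x) f_z(y) dν(z)`, where `f_z`
runs over Gaussians of all widths and centres. If `x₁, …, x_k` are exchangeable with law `μ`, then
`𝔼 (∑ f_z(x_i))² ≥ (k ∫ f_z dμ)²`; integrating over `z` shows that the sum over all pairs, diagonal
included, of the expected costs is at least `k²` times the energy of `μ ⊗ μ`. Restricting `ν` to
Gaussians that are not too narrow makes the diagonal terms bounded, so that after division by `k²`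
they contribute `O(1/k)`. Letting first `k → ∞` and then removing the restriction gives the limit.
-/

lemma sq_lintegral_le_lintegral_sq {Ω : Type*} [MeasurableSpace Ω] (P : Measure Ω)
    [IsProbabilityMeasure P] {g : Ω → ℝ≥0∞} (hg : AEMeasurable g P) :
    (∫⁻ ω, g ω ∂P) ^ 2 ≤ ∫⁻ ω, g ω ^ 2 ∂P := by
  have hoelder : ∫⁻ ω, g ω ∂P ≤ (∫⁻ ω, g ω ^ 2 ∂P) ^ (1 / 2 : ℝ) := by
    simpa using lintegral_mul_le_Lp_mul_Lq P Real.HolderConjugate.two_two hg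
      (aemeasurable_const (b := 1))
  calc (∫⁻ ω, g ω ∂P) ^ 2 ≤ ((∫⁻ ω, g ω ^ 2 ∂P) ^ (1 / 2 : ℝ)) ^ 2 := by gcongr
    _ = ∫⁻ ω, g ω ^ 2 ∂P := by rw [← ENNReal.rpow_natCast, ← ENNReal.rpow_mul]; norm_num

section SquareMixture

variable {X Z ι : Type*} [MeasurableSpace Z]

/-- The kernel `∫ f_z ⊗ f_z dν(z)`, a mixture of rank-one kernels. It stands in for a
nonnegative kernel of positive type, with the square root of the kernel given explicitly. -/
def squareMixture (ν : Measure Z) (f : Z → X → ℝ≥0∞) (x y : X) : ℝ≥0∞ :=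
  ∫⁻ z, f z x * f z y ∂ν

variable {ν : Measure Z} {f : Z → X → ℝ≥0∞}

lemma squareMixture_restrict_le (s : Set Z) (x y : X) :
    squareMixture (ν.restrict s) f x y ≤ squareMixture ν f x y :=
  setLIntegral_le_lintegral _ _

variable [MeasurableSpace X]

lemma measurable_mul_of_measurable_uncurry (hf : Measurable (Function.uncurry f)) :
    Measurable fun q : (X × X) × Z ↦ f q.2 q.1.1 * f q.2 q.1.2 :=
  (hf.comp (by fun_prop : Measurable fun q : (X × X) × Z ↦ (q.2, q.1.1))).mul
    (hf.comp (by fun_prop : Measurable fun q : (X × X) × Z ↦ (q.2, q.1.2)))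

lemma measurable_squareMixture [SFinite ν] (hf : Measurable (Function.uncurry f)) :
    Measurable fun p : X × X ↦ squareMixture ν f p.1 p.2 :=
  (measurable_mul_of_measurable_uncurry hf).lintegral_prod_right'

lemma lintegral_squareMixture_prod [SFinite ν] (hf : Measurable (Function.uncurry f))
    (μ : Measure X) [SFinite μ] :
    ∫⁻ p, squareMixture ν f p.1 p.2 ∂(μ.prod μ) = ∫⁻ z, (∫⁻ x, f z x ∂μ) ^ 2 ∂ν := by
  have section_aemeasurable (z : Z) : AEMeasurable (f z) μ := hf.of_uncurry_left.aemeasurable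
  simp only [squareMixture]
  rw [lintegral_lintegral_swap (measurable_mul_of_measurable_uncurry hf).aemeasurable]
  refine lintegral_congr fun z ↦ ?_
  rw [lintegral_prod_mul (section_aemeasurable z) (section_aemeasurable z), sq]

lemma map_eval_eq_map_fst [Nontrivial ι] {γ : Measure (ι → X)} {μ₂ : Measure (X × X)}
    (hpair : ∀ i j, i ≠ j → γ.map (fun x ↦ (x i, x j)) = μ₂) (i : ι) :
    γ.map (fun x ↦ x i) = μ₂.map Prod.fst := by
  obtain ⟨j, hji⟩ := exists_ne i
  rw [← hpair i j hji.symm, Measure.map_map measurable_fst (by fun_prop)]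
  rfl

variable [Fintype ι]

lemma sum_sum_squareMixture (hf : Measurable (Function.uncurry f)) (x : ι → X) :
    ∑ i, ∑ j, squareMixture ν f (x i) (x j) = ∫⁻ z, (∑ i, f z (x i)) ^ 2 ∂ν := by
  have term_measurable (i j : ι) : Measurable fun z ↦ f z (x i) * f z (x j) :=
    hf.of_uncurry_right.mul hf.of_uncurry_right
  simp only [squareMixture, sq, Finset.sum_mul_sum]
  rw [lintegral_finsetSum _ fun i _ ↦ Finset.measurable_fun_sum _ fun j _ ↦ term_measurable i j]
  exact Finset.sum_congr rfl fun i _ ↦ (lintegral_finsetSum _ fun j _ ↦ term_measurable i j).symm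

lemma card_sq_mul_lintegral_squareMixture_prod_le [SFinite ν]
    (hf : Measurable (Function.uncurry f)) {μ : Measure X} [SFinite μ]
    {γ : Measure (ι → X)} [IsProbabilityMeasure γ] (hγ : ∀ i, γ.map (fun x ↦ x i) = μ) :
    (Fintype.card ι : ℝ≥0∞) ^ 2 * ∫⁻ p, squareMixture ν f p.1 p.2 ∂(μ.prod μ) ≤
      ∫⁻ x, ∑ i, ∑ j, squareMixture ν f (x i) (x j) ∂γ := by
  have joint_measurable : Measurable fun q : (ι → X) × Z ↦ (∑ i, f q.2 (q.1 i)) ^ 2 :=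
    (Finset.measurable_fun_sum _ fun i _ ↦
      hf.comp (by fun_prop : Measurable fun q : (ι → X) × Z ↦ (q.2, q.1 i))).pow_const 2
  have coordinate_measurable (z : Z) (i : ι) : Measurable fun x : ι → X ↦ f z (x i) :=
    hf.of_uncurry_left.comp (measurable_pi_apply i)
  have expected_sum (z : Z) :
      ∫⁻ x, ∑ i, f z (x i) ∂γ = Fintype.card ι * ∫⁻ x, f z x ∂μ := by
    have marginal (i : ι) : ∫⁻ x, f z (x i) ∂γ = ∫⁻ x, f z x ∂μ := by
      rw [← hγ i, lintegral_map hf.of_uncurry_left (measurable_pi_apply i)]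
    rw [lintegral_finsetSum _ fun i _ ↦ coordinate_measurable z i]
    simp [marginal]
  calc (Fintype.card ι : ℝ≥0∞) ^ 2 * ∫⁻ p, squareMixture ν f p.1 p.2 ∂(μ.prod μ)
      = ∫⁻ z, (∫⁻ x, ∑ i, f z (x i) ∂γ) ^ 2 ∂ν := by
        rw [lintegral_squareMixture_prod hf, ← lintegral_const_mul' _ _ (by finiteness)]
        simp only [expected_sum, mul_pow]
    _ ≤ ∫⁻ z, ∫⁻ x, (∑ i, f z (x i)) ^ 2 ∂γ ∂ν :=
        lintegral_mono fun z ↦ sq_lintegral_le_lintegral_sq γ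
          (Finset.measurable_fun_sum _ fun i _ ↦ coordinate_measurable z i).aemeasurable
    _ = ∫⁻ x, ∑ i, ∑ j, squareMixture ν f (x i) (x j) ∂γ := by
        rw [← lintegral_lintegral_swap joint_measurable.aemeasurable]
        simp only [sum_sum_squareMixture hf]

lemma lintegral_sum_sum_le_of_pair_marginals {γ : Measure (ι → X)} [IsProbabilityMeasure γ]
    {μ₂ : Measure (X × X)} (hpair : ∀ i j, i ≠ j → γ.map (fun x ↦ (x i, x j)) = μ₂)
    {K : X → X → ℝ≥0∞} (hK : Measurable fun p : X × X ↦ K p.1 p.2) {M : ℝ≥0∞}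
    (hdiag : ∀ x, K x x ≤ M) :
    ∫⁻ x, ∑ i, ∑ j, K (x i) (x j) ∂γ ≤
      (Fintype.card ι : ℝ≥0∞) ^ 2 * ∫⁻ p, K p.1 p.2 ∂μ₂ + Fintype.card ι * M := by
  classical
  have pair_measurable (i j : ι) : Measurable fun x : ι → X ↦ K (x i) (x j) :=
    hK.comp (by fun_prop : Measurable fun x : ι → X ↦ (x i, x j))
  have pair_le (i j : ι) :
      ∫⁻ x, K (x i) (x j) ∂γ ≤ ∫⁻ p, K p.1 p.2 ∂μ₂ + if i = j then M else 0 := by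
    split_ifs with hij
    · subst hij
      calc ∫⁻ x, K (x i) (x i) ∂γ ≤ ∫⁻ _, M ∂γ := lintegral_mono fun x ↦ hdiag (x i)
        _ = M := by simp
        _ ≤ _ := le_add_self
    · rw [← hpair i j hij, lintegral_map hK (by fun_prop), add_zero]
  calc ∫⁻ x, ∑ i, ∑ j, K (x i) (x j) ∂γ = ∑ i, ∑ j, ∫⁻ x, K (x i) (x j) ∂γ := by
        rw [lintegral_finsetSum _ fun i _ ↦
          Finset.measurable_fun_sum _ fun j _ ↦ pair_measurable i j]
        exact Finset.sum_congr rfl fun i _ ↦ lintegral_finsetSum _ fun j _ ↦ pair_measurable i j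
    _ ≤ ∑ i, ∑ j, (∫⁻ p, K p.1 p.2 ∂μ₂ + if i = j then M else 0) :=
        Finset.sum_le_sum fun i _ ↦ Finset.sum_le_sum fun j _ ↦ pair_le i j
    _ = (Fintype.card ι : ℝ≥0∞) ^ 2 * ∫⁻ p, K p.1 p.2 ∂μ₂ + Fintype.card ι * M := by
        simp [Finset.sum_add_distrib, sq, mul_assoc]

lemma lintegral_squareMixture_prod_le_add_div_card [Nontrivial ι] [SFinite ν]
    (hf : Measurable (Function.uncurry f)) {γ : Measure (ι → X)} [IsProbabilityMeasure γ]
    {μ₂ : Measure (X × X)} [SFinite μ₂]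
    (hpair : ∀ i j, i ≠ j → γ.map (fun x ↦ (x i, x j)) = μ₂) {M : ℝ≥0∞}
    (hdiag : ∀ x, squareMixture ν f x x ≤ M) :
    ∫⁻ p, squareMixture ν f p.1 p.2 ∂((μ₂.map Prod.fst).prod (μ₂.map Prod.fst)) ≤
      ∫⁻ p, squareMixture ν f p.1 p.2 ∂μ₂ + M / Fintype.card ι := by
  have card_ne_zero : (Fintype.card ι : ℝ≥0∞) ≠ 0 := by simp
  rw [← ENNReal.mul_le_mul_iff_right (pow_ne_zero 2 card_ne_zero) (by finiteness)]
  calc (Fintype.card ι : ℝ≥0∞) ^ 2 * _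
      ≤ ∫⁻ x, ∑ i, ∑ j, squareMixture ν f (x i) (x j) ∂γ :=
        card_sq_mul_lintegral_squareMixture_prod_le hf (map_eval_eq_map_fst hpair)
    _ ≤ Fintype.card ι ^ 2 * ∫⁻ p, squareMixture ν f p.1 p.2 ∂μ₂ + Fintype.card ι * M :=
        lintegral_sum_sum_le_of_pair_marginals hpair (measurable_squareMixture hf) hdiag
    _ = Fintype.card ι ^ 2 * (∫⁻ p, squareMixture ν f p.1 p.2 ∂μ₂ + M / Fintype.card ι) := by
        rw [mul_add, sq, mul_assoc _ _ (M / _), ENNReal.mul_div_cancel card_ne_zero (by finiteness)]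

end SquareMixture

lemma tendsto_of_iSup_eq_of_le_add_div {a B M : ℕ → ℝ≥0∞} {L : ℝ≥0∞} (hB : ⨆ n, B n = L)
    (hM : ∀ n, M n ≠ ∞) (upper : ∀ k, a k ≤ L)
    (lower : ∀ n, ∀ᶠ k in atTop, B n ≤ a k + M n / k) : Tendsto a atTop (𝓝 L) := by
  refine tendsto_order.2 ⟨fun b hb ↦ ?_, fun b hb ↦ .of_forall fun k ↦ (upper k).trans_lt hb⟩
  obtain ⟨n, hn⟩ := lt_iSup_iff.1 (hB ▸ hb)
  have error_tendsto : Tendsto (fun k : ℕ ↦ M n / k) atTop (𝓝 0) := by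
    simpa using ENNReal.Tendsto.const_div ENNReal.tendsto_nat_nhds_top (.inr (hM n))
  have bound_tendsto : Tendsto (fun k : ℕ ↦ B n - M n / k) atTop (𝓝 (B n)) := by
    simpa using ENNReal.Tendsto.sub tendsto_const_nhds error_tendsto (.inr ENNReal.zero_ne_top)
  filter_upwards [bound_tendsto.eventually_const_lt hn, lower n] with k hk hlower
  exact hk.trans_le (tsub_le_iff_right.2 hlower)

section RepresentableCost

variable {d : ℕ}

/-- The optimal transport cost of `c` over symmetric `k`-representable couplings of `μ` with
itself; `VSCEk N k ρ` is `binom(N,2)` times this cost for `coulomb` and `μ = ρ/N`. -/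
def representableCost (k : ℕ) (c : Ed d → Ed d → ℝ≥0∞) (μ : Measure (Ed d)) : ℝ≥0∞ :=
  ⨅ (μ₂ : Measure (Ed d × Ed d)) (_ : IsProbabilityMeasure μ₂) (_ : μ₂.map Prod.swap = μ₂)
    (_ : μ₂.map Prod.fst = μ) (_ : μ₂.map Prod.snd = μ) (_ : NRep k μ₂),
    ∫⁻ p, c p.1 p.2 ∂μ₂

lemma nRep_prod_self (k : ℕ) (μ : Measure (Ed d)) [IsProbabilityMeasure μ] :
    NRep k (μ.prod μ) :=
  ⟨Measure.infinitePi fun _ : Fin k ↦ μ, inferInstance,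
    fun σ ↦ Measure.map_infinitePi_infinitePi_of_inj (P := fun _ : Fin k ↦ μ) σ.injective,
    fun _ _ hij ↦ Measure.infinitePi_map_eval_prod (P := fun _ : Fin k ↦ μ) hij⟩

lemma representableCost_le_lintegral_prod (k : ℕ) (c : Ed d → Ed d → ℝ≥0∞) (μ : Measure (Ed d))
    [IsProbabilityMeasure μ] : representableCost k c μ ≤ ∫⁻ p, c p.1 p.2 ∂(μ.prod μ) :=
  iInf₂_le_of_le (μ.prod μ) inferInstance <| iInf₂_le_of_le Measure.prod_swap (by simp) <|
    iInf₂_le (by simp) (nRep_prod_self k μ)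

variable {Z : Type*} [MeasurableSpace Z] {ν : Measure Z} [SFinite ν] {f : Z → Ed d → ℝ≥0∞}

lemma lintegral_squareMixture_prod_le_representableCost_add {k : ℕ} (hk : 2 ≤ k)
    (hf : Measurable (Function.uncurry f)) {c : Ed d → Ed d → ℝ≥0∞}
    (hc : ∀ x y, squareMixture ν f x y ≤ c x y) {M : ℝ≥0∞}
    (hdiag : ∀ x, squareMixture ν f x x ≤ M) (μ : Measure (Ed d)) :
    ∫⁻ p, squareMixture ν f p.1 p.2 ∂(μ.prod μ) ≤ representableCost k c μ + M / k := by
  have : Nontrivial (Fin k) := Fin.nontrivial_iff_two_le.2 hk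
  simp only [representableCost, ENNReal.iInf_add]
  refine le_iInf₂ fun μ₂ _ ↦ le_iInf₂ fun _ hfst ↦ le_iInf₂ fun _ hrep ↦ ?_
  obtain ⟨γ, _, -, hpair⟩ := hrep
  calc ∫⁻ p, squareMixture ν f p.1 p.2 ∂(μ.prod μ)
      ≤ ∫⁻ p, squareMixture ν f p.1 p.2 ∂μ₂ + M / k := by
        simpa [hfst] using lintegral_squareMixture_prod_le_add_div_card hf hpair hdiag
    _ ≤ ∫⁻ p, c p.1 p.2 ∂μ₂ + M / k := by
        gcongr with p
        exact hc p.1 p.2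

theorem tendsto_representableCost_squareMixture (hf : Measurable (Function.uncurry f))
    {S : ℕ → Set Z} (hS : Monotone S) (hcover : ⋃ n, S n = Set.univ) {M : ℕ → ℝ≥0∞}
    (hM : ∀ n, M n ≠ ∞) (hdiag : ∀ n x, squareMixture (ν.restrict (S n)) f x x ≤ M n)
    (μ : Measure (Ed d)) [IsProbabilityMeasure μ] :
    Tendsto (fun k ↦ representableCost k (squareMixture ν f) μ) atTop
      (𝓝 (∫⁻ p, squareMixture ν f p.1 p.2 ∂(μ.prod μ))) := by
  have energy_eq_iSup : ⨆ n, ∫⁻ p, squareMixture (ν.restrict (S n)) f p.1 p.2 ∂(μ.prod μ) =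
      ∫⁻ p, squareMixture ν f p.1 p.2 ∂(μ.prod μ) := by
    simp only [lintegral_squareMixture_prod hf]
    rw [← setLIntegral_iUnion_of_directed _ hS.directed_le, hcover, Measure.restrict_univ]
  refine tendsto_of_iSup_eq_of_le_add_div energy_eq_iSup hM
    (fun k ↦ representableCost_le_lintegral_prod k _ μ) fun n ↦ ?_
  filter_upwards [eventually_ge_atTop 2] with k hk
  exact lintegral_squareMixture_prod_le_representableCost_add hk hf
    (squareMixture_restrict_le (S n)) (hdiag n) μ

end RepresentableCost

section Gaussian

variable {V : Type*} [NormedAddCommGroup V] [InnerProductSpace ℝ V]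

/-- The Gaussian `x ↦ exp (-2 t² ‖x - z‖²)`, indexed by the pair `(t, z)` of inverse width and
centre. The factor `2` makes products of two bumps integrate in `z` to multiples of
`exp (-(t² ‖x - y‖²))`. -/
def gaussianBump (p : ℝ × V) (x : V) : ℝ≥0∞ :=
  ENNReal.ofReal (Real.exp (-(2 * p.1 ^ 2 * ‖x - p.2‖ ^ 2)))

lemma gaussianBump_mul_gaussianBump (t : ℝ) (x y z : V) :
    gaussianBump (t, z) x * gaussianBump (t, z) y =
      ENNReal.ofReal (Real.exp (-(4 * t ^ 2) * ‖z - midpoint ℝ x y‖ ^ 2)) *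
        ENNReal.ofReal (Real.exp (-(t ^ 2 * ‖x - y‖ ^ 2))) := by
  have sum_eq : x - z + (y - z) = (-2 : ℝ) • (z - midpoint ℝ x y) := by
    rw [midpoint_eq_smul_add, invOf_eq_inv]; module
  have parallelogram := parallelogram_law_with_norm ℝ (x - z) (y - z)
  rw [sum_eq, sub_sub_sub_cancel_right, norm_smul, norm_neg, Real.norm_ofNat]
    at parallelogram
  simp only [gaussianBump]
  rw [← ENNReal.ofReal_mul (by positivity), ← ENNReal.ofReal_mul (by positivity),
    ← Real.exp_add, ← Real.exp_add]
  congr 2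
  linear_combination t ^ 2 * parallelogram

variable (V) in
/-- The density in `t` of `gaussianMixing`: `2/√π` comes from
`1/r = (2/√π) ∫₀^∞ exp (-t² r²) dt`, the denominator normalises products of `gaussianBump`s. -/
def gaussianMixingDensity (t : ℝ) : ℝ≥0∞ :=
  ENNReal.ofReal (2 / √Real.pi) /
    ENNReal.ofReal ((Real.pi / (4 * t ^ 2)) ^ (Module.finrank ℝ V / 2 : ℝ))

lemma measurable_gaussianMixingDensity : Measurable (gaussianMixingDensity V) := by
  unfold gaussianMixingDensity
  fun_prop

variable [MeasurableSpace V] [BorelSpace V] [FiniteDimensional ℝ V]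

lemma measurable_uncurry_gaussianBump :
    Measurable (Function.uncurry (gaussianBump (V := V))) := by
  unfold Function.uncurry gaussianBump
  fun_prop

lemma lintegral_exp_neg_mul_sq_norm {b : ℝ} (hb : 0 < b) :
    ∫⁻ v : V, ENNReal.ofReal (Real.exp (-b * ‖v‖ ^ 2)) =
      ENNReal.ofReal ((Real.pi / b) ^ (Module.finrank ℝ V / 2 : ℝ)) := by
  have integral_eq := GaussianFourier.integral_rexp_neg_mul_sq_norm (V := V) hb
  have integrable : Integrable fun v : V ↦ Real.exp (-b * ‖v‖ ^ 2) :=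
    .of_integral_ne_zero (by rw [integral_eq]; positivity)
  rw [← ofReal_integral_eq_lintegral_ofReal integrable (.of_forall fun _ ↦ by positivity),
    integral_eq]

lemma lintegral_gaussianBump_mul_gaussianBump {t : ℝ} (ht : 0 < t) (x y : V) :
    ∫⁻ z, gaussianBump (t, z) x * gaussianBump (t, z) y =
      ENNReal.ofReal ((Real.pi / (4 * t ^ 2)) ^ (Module.finrank ℝ V / 2 : ℝ)) *
        ENNReal.ofReal (Real.exp (-(t ^ 2 * ‖x - y‖ ^ 2))) := by
  simp only [gaussianBump_mul_gaussianBump]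
  rw [lintegral_mul_const' _ _ (by finiteness),
    lintegral_sub_right_eq_self fun z : V ↦ ENNReal.ofReal (Real.exp (-(4 * t ^ 2) * ‖z‖ ^ 2)),
    lintegral_exp_neg_mul_sq_norm (by positivity)]

variable (V) in
/-- The measure on pairs `(t, z)` of inverse width and centre for which the Coulomb cost is the
square mixture of the `gaussianBump`s. -/
def gaussianMixing : Measure (ℝ × V) :=
  ((volume.restrict (Set.Ioi 0)).withDensity (gaussianMixingDensity V)).prod volume

instance sFinite_gaussianMixing : SFinite (gaussianMixing V) := by
  unfold gaussianMixing
  infer_instance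

lemma squareMixture_gaussianMixing_restrict {T : Set ℝ} (hT : MeasurableSet T) (x y : V) :
    squareMixture ((gaussianMixing V).restrict (T ×ˢ Set.univ)) gaussianBump x y =
      ENNReal.ofReal (2 / √Real.pi) *
        ∫⁻ t in T ∩ Set.Ioi 0, ENNReal.ofReal (Real.exp (-(t ^ 2 * ‖x - y‖ ^ 2))) := by
  have integrand : Measurable fun p : ℝ × V ↦ gaussianBump p x * gaussianBump p y :=
    measurable_uncurry_gaussianBump.of_uncurry_right.mul
      measurable_uncurry_gaussianBump.of_uncurry_right
  rw [squareMixture, gaussianMixing, ← Measure.prod_restrict, Measure.restrict_univ,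
    restrict_withDensity hT, Measure.restrict_restrict hT, lintegral_prod _ integrand.aemeasurable,
    lintegral_withDensity_eq_lintegral_mul _ measurable_gaussianMixingDensity
      integrand.lintegral_prod_right', ← lintegral_const_mul' _ _ (by finiteness)]
  refine setLIntegral_congr_fun (hT.inter measurableSet_Ioi) fun t ht ↦ ?_
  have ht_pos : 0 < t := ht.2
  simp only [Pi.mul_apply]
  rw [lintegral_gaussianBump_mul_gaussianBump ht_pos, gaussianMixingDensity, ← mul_assoc,
    ENNReal.div_mul_cancel (ENNReal.ofReal_pos.2 (by positivity)).ne' (by finiteness)]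

lemma squareMixture_gaussianMixing_restrict_Iic_self (a : ℝ) (x : V) :
    squareMixture ((gaussianMixing V).restrict (Set.Iic a ×ˢ Set.univ)) gaussianBump x x =
      ENNReal.ofReal (2 / √Real.pi) * ENNReal.ofReal a := by
  rw [squareMixture_gaussianMixing_restrict measurableSet_Iic, Set.inter_comm, Set.Ioi_inter_Iic]
  simp

end Gaussian

section Coulomb

variable {d : ℕ}

lemma measurable_coulomb : Measurable fun p : Ed d × Ed d ↦ coulomb p.1 p.2 := by
  unfold coulomb
  fun_prop

lemma two_div_sqrt_pi_mul_lintegral_exp_neg_sq_mul_sq {r : ℝ} (hr : 0 ≤ r) :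
    ENNReal.ofReal (2 / √Real.pi) *
      ∫⁻ t in Set.Ioi 0, ENNReal.ofReal (Real.exp (-(t ^ 2 * r ^ 2))) =
        (ENNReal.ofReal r)⁻¹ := by
  rcases hr.eq_or_lt with rfl | hr
  · simp [ENNReal.mul_top, Real.pi_pos]
  · have integrable : IntegrableOn (fun t ↦ Real.exp (-r ^ 2 * t ^ 2)) (Set.Ioi 0) :=
      (integrable_exp_neg_mul_sq (by positivity)).integrableOn
    simp only [mul_comm _ (r ^ 2), ← neg_mul]
    rw [← ofReal_integral_eq_lintegral_ofReal integrable (.of_forall fun _ ↦ by positivity),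
      integral_gaussian_Ioi, ← ENNReal.ofReal_mul (by positivity), ← ENNReal.ofReal_inv_of_pos hr,
      Real.sqrt_div Real.pi_pos.le, Real.sqrt_sq hr.le]
    congr 1
    field_simp

theorem squareMixture_gaussianMixing_eq_coulomb :
    squareMixture (gaussianMixing (Ed d)) gaussianBump = coulomb := by
  ext x y
  simpa [two_div_sqrt_pi_mul_lintegral_exp_neg_sq_mul_sq, coulomb, dist_eq_norm] using
    squareMixture_gaussianMixing_restrict MeasurableSet.univ x y

theorem tendsto_representableCost_coulomb (μ : Measure (Ed d)) [IsProbabilityMeasure μ] :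
    Tendsto (fun k ↦ representableCost k coulomb μ) atTop
      (𝓝 (∫⁻ p, coulomb p.1 p.2 ∂(μ.prod μ))) := by
  have slabs_mono : Monotone fun n : ℕ ↦ Set.Iic (n : ℝ) ×ˢ (Set.univ : Set (Ed d)) :=
    fun m n hmn ↦ Set.prod_mono_left (Set.Iic_subset_Iic.2 (mod_cast hmn))
  have slabs_cover : ⋃ n : ℕ, Set.Iic (n : ℝ) ×ˢ (Set.univ : Set (Ed d)) = Set.univ := by
    ext p
    simpa using exists_nat_ge p.1
  rw [← squareMixture_gaussianMixing_eq_coulomb]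
  exact tendsto_representableCost_squareMixture measurable_uncurry_gaussianBump
    slabs_mono slabs_cover (fun n ↦ by finiteness)
    (fun n x ↦ (squareMixture_gaussianMixing_restrict_Iic_self n x).le) μ

end Coulomb

section Density

variable {X : Type*} [MeasurableSpace X] {m : Measure X} {ρ : X → ℝ} {a : ℝ}

lemma isProbabilityMeasure_withDensity_div (ha : 0 < a) (hnonneg : 0 ≤ᵐ[m] ρ)
    (hL1 : Integrable ρ m) (hmass : ∫ y, ρ y ∂m = a) :
    IsProbabilityMeasure (m.withDensity fun y ↦ ENNReal.ofReal (ρ y / a)) := by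
  have nonneg_div : 0 ≤ᵐ[m] fun y ↦ ρ y / a :=
    hnonneg.mono fun y hy ↦ div_nonneg hy ha.le
  constructor
  rw [withDensity_apply _ .univ, setLIntegral_univ,
    ← ofReal_integral_eq_lintegral_ofReal (hL1.div_const _) nonneg_div, integral_div, hmass,
    div_self ha.ne', ENNReal.ofReal_one]

lemma lintegral_prod_withDensity_self [SFinite m] {g : X → ℝ≥0∞} (hg : AEMeasurable g m)
    {c : X → X → ℝ≥0∞} (hc : Measurable fun p : X × X ↦ c p.1 p.2) :
    ∫⁻ p, c p.1 p.2 ∂((m.withDensity g).prod (m.withDensity g)) =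
      ∫⁻ x, ∫⁻ y, g x * g y * c x y ∂m ∂m := by
  have hgg : AEMeasurable (fun p : X × X ↦ g p.1 * g p.2) (m.prod m) :=
    hg.comp_fst.mul hg.comp_snd
  rw [prod_withDensity₀ hg hg, lintegral_withDensity_eq_lintegral_mul₀ hgg hc.aemeasurable,
    lintegral_prod _ (hgg.mul hc.aemeasurable)]
  rfl

lemma lintegral_prod_withDensity_div [SFinite m] (ha : 0 < a) (hρ : AEMeasurable ρ m)
    {c : X → X → ℝ≥0∞} (hc : Measurable fun p : X × X ↦ c p.1 p.2) :
    ∫⁻ p, c p.1 p.2 ∂((m.withDensity fun y ↦ ENNReal.ofReal (ρ y / a)).prod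
        (m.withDensity fun y ↦ ENNReal.ofReal (ρ y / a))) =
      (ENNReal.ofReal a)⁻¹ ^ 2 *
        ∫⁻ x, ∫⁻ y, ENNReal.ofReal (ρ x) * ENNReal.ofReal (ρ y) * c x y ∂m ∂m := by
  have ofReal_div (x : X) :
      ENNReal.ofReal (ρ x / a) = (ENNReal.ofReal a)⁻¹ * ENNReal.ofReal (ρ x) := by
    rw [ENNReal.ofReal_div_of_pos ha, div_eq_mul_inv, mul_comm]
  have const_ne_top : (ENNReal.ofReal a)⁻¹ ^ 2 ≠ ∞ :=
    pow_ne_top (ENNReal.inv_ne_top.2 (ENNReal.ofReal_pos.2 ha).ne')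
  rw [lintegral_prod_withDensity_self (hρ.div_const _).ennreal_ofReal hc]
  simp only [ofReal_div, ← lintegral_const_mul' _ _ const_ne_top]
  refine lintegral_congr fun x ↦ lintegral_congr fun y ↦ ?_
  ring

end Density

lemma choose_two_mul_ofReal_inv_sq {N : ℕ} (hN : N ≠ 0) :
    (N.choose 2 : ℝ≥0∞) * (ENNReal.ofReal N)⁻¹ ^ 2 = ENNReal.ofReal ((1 - 1 / (N : ℝ)) / 2) := by
  rw [← ENNReal.ofReal_natCast, ← ENNReal.ofReal_inv_of_pos (by positivity),
    ← ENNReal.ofReal_pow (by positivity), ← ENNReal.ofReal_mul (by positivity), Nat.cast_choose_two]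
  congr 1
  field_simp

theorem VSCEk_tendsto_self_interaction_corrected_mean_field_general
    (N : ℕ) (hN : N ≠ 0) (ρ : Ed 3 → ℝ) (hnonneg : 0 ≤ᵐ[volume] ρ)
    (hL1 : Integrable ρ) (hmass : ∫ y, ρ y = (N : ℝ)) :
    Tendsto (fun k : ℕ => VSCEk N k ρ) atTop
      (𝓝 (ENNReal.ofReal ((1 - 1 / (N : ℝ)) / 2) *
        ∫⁻ x, ∫⁻ y, ENNReal.ofReal (ρ x) * ENNReal.ofReal (ρ y) * coulomb x y)) := by
  have hN_pos : (0 : ℝ) < N := by positivity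
  have := isProbabilityMeasure_withDensity_div hN_pos hnonneg hL1 hmass
  rw [← choose_two_mul_ofReal_inv_sq hN, mul_assoc,
    ← lintegral_prod_withDensity_div hN_pos hL1.aemeasurable measurable_coulomb]
  exact ENNReal.Tendsto.const_mul (tendsto_representableCost_coulomb _)
    (.inr (ENNReal.natCast_ne_top _))

/-- Corollary 3.6: for an `N`-electron density `ρ` of finite Coulomb energy,
`V_ee^{SCE,k}[ρ] → (1/2)(1 - 1/N) ∫∫ ρ(x)ρ(y)/|x-y| dx dy` as `k → ∞`. -/
theorem VSCEk_tendsto_self_interaction_corrected_mean_field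
    (N : ℕ) (hN : 2 ≤ N) (ρ : Ed 3 → ℝ) (hnonneg : ∀ y, 0 ≤ ρ y)
    (hL1 : Integrable ρ) (hmass : ∫ y, ρ y = (N : ℝ))
    (hfin : ∫⁻ x, ∫⁻ y, ENNReal.ofReal (ρ x) * ENNReal.ofReal (ρ y) * coulomb x y < ⊤) :
    Tendsto (fun k : ℕ => VSCEk N k ρ) atTop
      (𝓝 (ENNReal.ofReal ((1 - 1 / (N : ℝ)) / 2) *
        ∫⁻ x, ∫⁻ y, ENNReal.ofReal (ρ x) * ENNReal.ofReal (ρ y) * coulomb x y)) := by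
  exact VSCEk_tendsto_self_interaction_corrected_mean_field_general N (by positivity) ρ
    (.of_forall hnonneg) hL1 hmass
end
end
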